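/- Let α ∈ ℝ^L satisfy the Diophantine condition |j·α| ≥ C‖j‖^{−s} for all nonzero j ∈ ℤ^L, with C > 0, s > 1. Let f : 𝕋^L → ℂ be smooth with zero mean. Then there is a smooth g : 𝕋^L → ℂ whose directional derivative along α equals f, i.e., (d/dt)|_{t=0} g(θ + tα) = f(θ) for all θ. -/

import Mathlib

open Complex MeasureTheory

/-- Fourier coefficient of a `2π`-periodic function on `ℝ^L`. -/
noncomputable def torusFourierCoef (L : ℕ) (f : (Fin L → ℝ) → ℂ) (j : Fin L → ℤ) : ℂ :=
  (((2 * Real.pi) ^ L : ℝ) : ℂ)⁻¹ *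
    ∫ θ in Set.univ.pi fun _ : Fin L => Set.Icc (0 : ℝ) (2 * Real.pi),
      Complex.exp (-I * ∑ l, (j l : ℂ) * (θ l : ℂ)) * f θ

/-- `f` is `2π ℤ^L`-periodic. -/
def TorusPeriodic (L : ℕ) (f : (Fin L → ℝ) → ℂ) : Prop :=
  ∀ (θ : Fin L → ℝ) (m : Fin L → ℤ), f (θ + fun l => 2 * Real.pi * (m l)) = f θ

/-!
Along the flow every Fourier mode of the torus is an eigenfunction of the derivative, so the
equation decouples into `i (j·α) ĝ(j) = f̂(j)`. The mean-zero hypothesis solves it at `j = 0`; for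
`j ≠ 0` the Diophantine condition bounds the division by `j·α` by a fixed power of `‖j‖`, which is
absorbed by the rapid decay of `f̂`. Hence `ĝ` decays rapidly and its Fourier series is smooth.

The `2π`-periodic functions of the statement are transported to Mathlib's `UnitAddTorus`, a product
of copies of `ℝ/ℤ`, by rescaling the variable.
-/

section Development

open UnitAddTorus
open scoped ContDiff FourierTransform

variable {ι : Type*}

/-- The covering homomorphism `ℝ^ι → (ℝ/ℤ)^ι`. -/
noncomputable def toTorus : (ι → ℝ) →+ UnitAddTorus ι :=
  (QuotientAddGroup.mk' _).compLeft ι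

theorem isOpenQuotientMap_toTorus : IsOpenQuotientMap (toTorus : (ι → ℝ) → UnitAddTorus ι) :=
  .piMap fun _ => QuotientAddGroup.isOpenQuotientMap_mk

theorem toTorus_eq_iff {x y : ι → ℝ} :
    toTorus x = toTorus y ↔ ∃ m : ι → ℤ, x = y + fun i => (m i : ℝ) := by
  have coordinate (i : ι) : (x i : UnitAddCircle) = y i ↔ ∃ m : ℤ, x i = y i + m := by
    rw [eq_comm, QuotientAddGroup.eq, AddSubgroup.mem_zmultiples_iff]
    simp only [zsmul_eq_mul, mul_one, eq_neg_add_iff_add_eq, eq_comm]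
  calc toTorus x = toTorus y ↔ ∀ i, (x i : UnitAddCircle) = y i := funext_iff
    _ ↔ ∃ m : ι → ℤ, x = y + fun i => (m i : ℝ) := by
        simp only [coordinate, Classical.skolem, funext_iff, Pi.add_apply]

variable [Fintype ι]
variable {E F : Type*} [NormedAddCommGroup E] [NormedAddCommGroup F]

theorem pi_norm_le_sum_norm {G : ι → Type*} [∀ i, SeminormedAddCommGroup (G i)] (x : ∀ i, G i) :
    ‖x‖ ≤ ∑ i, ‖x i‖ :=
  (pi_norm_le_iff_of_nonneg (Finset.sum_nonneg fun _ _ => norm_nonneg _)).2 fun i =>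
    Finset.single_le_sum (f := fun i => ‖x i‖) (fun _ _ => norm_nonneg _) (Finset.mem_univ i)

theorem summable_norm_int_inv_pow {M : ℕ} (hM : Fintype.card ι < M) :
    Summable fun n : ι → ℤ => ‖n‖⁻¹ ^ M := by
  let Λ : Submodule ℤ (ι → ℝ) := Submodule.span ℤ (Set.range (Pi.basisFun ℝ ι))
  have cast_mem (n : ι → ℤ) : (fun i => (n i : ℝ)) ∈ Λ := by
    rw [Module.Basis.mem_span_iff_repr_mem]
    exact fun i => ⟨n i, by simp⟩
  let toLattice (n : ι → ℤ) : Λ := ⟨fun i => (n i : ℝ), cast_mem n⟩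
  have toLattice_injective : Function.Injective toLattice := fun m n h => by
    ext i
    exact Int.cast_injective (congrFun (congrArg Subtype.val h) i)
  have norm_toLattice (n : ι → ℤ) : ‖toLattice n‖ = ‖n‖ := by
    change ‖fun i => (n i : ℝ)‖ = ‖n‖
    simp only [Pi.norm_def]
    congr 2
  have finrank_lt : Module.finrank ℤ Λ < M := by
    rw [ZLattice.rank ℝ Λ, Module.finrank_pi]
    exact hM
  simpa only [Function.comp_def, norm_toLattice] using
    (ZLattice.summable_norm_pow_inv Λ M finrank_lt).comp_injective toLattice_injective

/-! ### Rapidly decreasing families -/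

/-- Rapid decay of a family indexed by `ℤ^ι`: it is `O(‖n‖⁻ᴺ)` for every `N`. Smooth functions
on the torus are the ones whose Fourier coefficients have this property. -/
def RapidlyDecreasing (c : (ι → ℤ) → E) : Prop :=
  ∀ N : ℕ, ∃ K : ℝ, ∀ n, ‖n‖ ^ N * ‖c n‖ ≤ K

namespace RapidlyDecreasing

variable {c : (ι → ℤ) → E}

theorem summable_pow_mul_norm (hc : RapidlyDecreasing c) (k : ℕ) :
    Summable fun n => ‖n‖ ^ k * ‖c n‖ := by
  set M := Fintype.card ι + 1
  obtain ⟨K, hK⟩ := hc (k + M)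
  refine .of_norm_bounded_eventually
    ((summable_norm_int_inv_pow (Nat.lt_succ_self _)).mul_left K) ?_
  filter_upwards [(Set.finite_singleton (0 : ι → ℤ)).compl_mem_cofinite] with n hn
  have norm_ne_zero : ‖n‖ ≠ 0 := norm_ne_zero_iff.2 hn
  calc ‖‖n‖ ^ k * ‖c n‖‖ = ‖n‖ ^ (k + M) * ‖c n‖ * ‖n‖⁻¹ ^ M := by
        rw [Real.norm_of_nonneg (by positivity), pow_add, inv_pow]
        field_simp
    _ ≤ K * ‖n‖⁻¹ ^ M := by gcongr; exact hK n

theorem summable_norm (hc : RapidlyDecreasing c) : Summable fun n => ‖c n‖ := by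
  simpa using hc.summable_pow_mul_norm 0

theorem of_norm_le_pow_mul {d : (ι → ℤ) → F} {A : ℝ} {p : ℕ} (hc : RapidlyDecreasing c)
    (hd : ∀ n, ‖d n‖ ≤ A * ‖n‖ ^ p * ‖c n‖) : RapidlyDecreasing d := by
  intro N
  obtain ⟨K, hK⟩ := hc (N + p)
  refine ⟨|A| * K, fun n => ?_⟩
  calc ‖n‖ ^ N * ‖d n‖ ≤ ‖n‖ ^ N * (|A| * ‖n‖ ^ p * ‖c n‖) := by
        gcongr
        exact (hd n).trans (by gcongr; exact le_abs_self A)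
    _ = |A| * (‖n‖ ^ (N + p) * ‖c n‖) := by ring
    _ ≤ |A| * K := by gcongr; exact hK n

end RapidlyDecreasing

/-! ### Characters of the torus -/

theorem contDiff_fourierChar {k : WithTop ℕ∞} : ContDiff ℝ k fun t : ℝ => (𝐞 t : ℂ) := by
  simp only [Real.fourierChar_apply]
  exact ((ofRealCLM.contDiff.comp (contDiff_const.mul contDiff_id)).mul contDiff_const).cexp

theorem iteratedDeriv_fourierChar (k : ℕ) :
    iteratedDeriv k (fun t : ℝ => (𝐞 t : ℂ)) = fun t => (2 * Real.pi * I) ^ k * 𝐞 t := by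
  induction k with
  | zero => simp
  | succ k ih =>
    ext t
    rw [iteratedDeriv_succ, ih, ((Real.hasDerivAt_fourierChar t).const_mul _).deriv]
    ring

theorem norm_two_pi_I : ‖(2 * Real.pi * I : ℂ)‖ = 2 * Real.pi := by
  simp [abs_of_pos Real.pi_pos]

theorem norm_iteratedFDeriv_fourierChar_smul_le [NormedSpace ℂ E] {V : Type*}
    [NormedAddCommGroup V] [NormedSpace ℝ V] (ℓ : V →L[ℝ] ℝ) (e : E) (k : ℕ) (x : V) :
    ‖iteratedFDeriv ℝ k (fun y => (𝐞 (ℓ y) : ℂ) • e) x‖ ≤ (2 * Real.pi * ‖ℓ‖) ^ k * ‖e‖ := by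
  have contDiff_wave : ContDiff ℝ k fun t : ℝ => (𝐞 t : ℂ) • e := contDiff_fourierChar.smul_const e
  have comp_right := ℓ.iteratedFDeriv_comp_right contDiff_wave x (i := k) le_rfl
  rw [Function.comp_def] at comp_right
  calc ‖iteratedFDeriv ℝ k (fun y => (𝐞 (ℓ y) : ℂ) • e) x‖
      ≤ ‖iteratedFDeriv ℝ k (fun t : ℝ => (𝐞 t : ℂ) • e) (ℓ x)‖ * ∏ _i : Fin k, ‖ℓ‖ := by
        rw [comp_right]
        exact ContinuousMultilinearMap.norm_compContinuousLinearMap_le _ _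
    _ = (2 * Real.pi * ‖ℓ‖) ^ k * ‖e‖ := by
        rw [norm_iteratedFDeriv_eq_norm_iteratedDeriv,
          iteratedDeriv_smul_const contDiff_fourierChar.contDiffAt, iteratedDeriv_fourierChar,
          norm_smul, norm_mul, norm_pow, norm_two_pi_I, Circle.norm_coe, Finset.prod_const,
          Finset.card_univ, Fintype.card_fin]
        ring

/-- The linear form `x ↦ n·x` on `ℝ^ι` with integer coefficients `n`. -/
noncomputable def intCovector (n : ι → ℤ) : (ι → ℝ) →L[ℝ] ℝ :=
  ∑ i, (n i : ℝ) • ContinuousLinearMap.proj i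

theorem intCovector_apply (n : ι → ℤ) (x : ι → ℝ) : intCovector n x = ∑ i, (n i : ℝ) * x i := by
  simp [intCovector]

theorem intCovector_single [DecidableEq ι] (n : ι → ℤ) (i : ι) :
    intCovector n (Pi.single i 1) = n i := by
  simp [intCovector_apply, Pi.single_apply]

theorem sum_abs_int_le (n : ι → ℤ) : ∑ i, |(n i : ℝ)| ≤ Fintype.card ι * ‖n‖ := by
  simpa [Int.norm_eq_abs] using Pi.sum_norm_apply_le_norm n

theorem norm_intCovector_le (n : ι → ℤ) : ‖intCovector n‖ ≤ Fintype.card ι * ‖n‖ := by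
  refine ContinuousLinearMap.opNorm_le_bound _ (by positivity) fun x => ?_
  calc ‖intCovector n x‖ ≤ ∑ i, ‖(n i : ℝ) * x i‖ := intCovector_apply n x ▸ norm_sum_le _ _
    _ ≤ ∑ i, |(n i : ℝ)| * ‖x‖ := by
        gcongr with i
        rw [norm_mul, Real.norm_eq_abs]
        gcongr
        exact norm_le_pi_norm x i
    _ ≤ Fintype.card ι * ‖n‖ * ‖x‖ := by
        rw [← Finset.sum_mul]
        gcongr
        exact sum_abs_int_le n

theorem mFourier_apply_add (n : ι → ℤ) (x y : UnitAddTorus ι) :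
    mFourier n (x + y) = mFourier n x * mFourier n y := by
  simp [mFourier, AddCircle.toCircle_add, Finset.prod_mul_distrib]

theorem norm_mFourier_apply (n : ι → ℤ) (x : UnitAddTorus ι) : ‖mFourier n x‖ = 1 := by
  simp [mFourier, Circle.norm_coe]

theorem mFourier_toTorus (n : ι → ℤ) (x : ι → ℝ) :
    mFourier n (toTorus x) = 𝐞 (intCovector n x) := by
  change ∏ i, fourier (n i) (x i : UnitAddCircle) = _
  simp only [fourier_coe_apply, ← Complex.exp_sum, Real.fourierChar_apply, intCovector_apply]
  push_cast
  simp only [Finset.mul_sum, Finset.sum_mul]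
  congr! 2 with i
  ring

theorem hasDerivAt_mFourier_line (n : ι → ℤ) (v : ι → ℝ) (x : UnitAddTorus ι) (t : ℝ) :
    HasDerivAt (fun t : ℝ => mFourier n (x + toTorus (t • v)))
      (2 * Real.pi * I * intCovector n v * mFourier n (x + toTorus (t • v))) t := by
  have inner : HasDerivAt (fun t : ℝ => t * intCovector n v) (intCovector n v) t := by
    simpa using (hasDerivAt_id t).mul_const (intCovector n v)
  have outer := ((Real.hasDerivAt_fourierChar _).scomp t inner).const_mul (mFourier n x)
  simp only [mFourier_apply_add, mFourier_toTorus, map_smul, smul_eq_mul]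
  exact outer.congr_deriv (by rw [real_smul]; ring)

/-! ### Smooth functions on the torus -/

section Smooth

variable [NormedSpace ℝ E]

/-- Smoothness of a function on the torus `(ℝ/ℤ)^ι`, expressed on the universal cover `ℝ^ι`. -/
def SmoothOnTorus (Φ : UnitAddTorus ι → E) : Prop :=
  ContDiff ℝ ∞ (Φ ∘ toTorus)

/-- The derivative of `Φ` along the constant vector field `v` on the torus. -/
noncomputable def torusLineDeriv (v : ι → ℝ) (Φ : UnitAddTorus ι → E) (x : UnitAddTorus ι) : E :=
  deriv (fun t : ℝ => Φ (x + toTorus (t • v))) 0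

namespace SmoothOnTorus

variable {Φ : UnitAddTorus ι → E}

theorem continuous (hΦ : SmoothOnTorus Φ) : Continuous Φ :=
  isOpenQuotientMap_toTorus.continuous_comp_iff.1 (ContDiff.continuous hΦ)

theorem hasDerivAt_line (hΦ : SmoothOnTorus Φ) (v : ι → ℝ) (x : UnitAddTorus ι) (t : ℝ) :
    HasDerivAt (fun t : ℝ => Φ (x + toTorus (t • v)))
      (torusLineDeriv v Φ (x + toTorus (t • v))) t := by
  have hasDerivAt_zero (y : UnitAddTorus ι) :
      HasDerivAt (fun t : ℝ => Φ (y + toTorus (t • v))) (torusLineDeriv v Φ y) 0 := by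
    obtain ⟨y, rfl⟩ := isOpenQuotientMap_toTorus.surjective y
    have along_line : DifferentiableAt ℝ (fun t : ℝ => Φ (toTorus (y + t • v))) 0 :=
      ((ContDiff.differentiable hΦ (by simp) y).hasFDerivAt.hasLineDerivAt v).lineDifferentiableAt
    simp only [map_add] at along_line
    exact along_line.hasDerivAt
  have shifted := HasDerivAt.comp_sub_const t t
    ((sub_self t).symm ▸ hasDerivAt_zero (x + toTorus (t • v)))
  simpa only [add_assoc, ← map_add, ← add_smul, add_sub_cancel] using shifted

theorem torusLineDeriv_toTorus (hΦ : SmoothOnTorus Φ) (v x : ι → ℝ) :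
    torusLineDeriv v Φ (toTorus x) = fderiv ℝ (Φ ∘ toTorus) x v := by
  rw [← (ContDiff.differentiable hΦ (by simp) x).lineDeriv_eq_fderiv]
  simp only [torusLineDeriv, lineDeriv, Function.comp_apply, map_add]

protected theorem torusLineDeriv (hΦ : SmoothOnTorus Φ) (v : ι → ℝ) :
    SmoothOnTorus (torusLineDeriv v Φ) := by
  have lifted : torusLineDeriv v Φ ∘ toTorus = fun x => fderiv ℝ (Φ ∘ toTorus) x v :=
    funext (hΦ.torusLineDeriv_toTorus v)
  rw [SmoothOnTorus, lifted]
  exact (ContDiff.fderiv_right hΦ (by simp)).clm_apply contDiff_const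

end SmoothOnTorus

end Smooth

/-! ### Fourier coefficients and Fourier series -/

variable [NormedSpace ℂ E] {Φ : UnitAddTorus ι → E}

theorem mFourierCoeff_comp_add_right (Φ : UnitAddTorus ι → E) (a : UnitAddTorus ι) (n : ι → ℤ) :
    mFourierCoeff (fun x => Φ (x + a)) n = mFourier n a • mFourierCoeff Φ n := by
  have integrand (x : UnitAddTorus ι) : mFourier (-n) x • Φ (x + a) =
      mFourier n a • mFourier (-n) (x + a) • Φ (x + a) := by
    have : mFourier n a * mFourier (-n) a = 1 := by
      rw [← mFourier_add, add_neg_cancel, mFourier_zero, ContinuousMap.one_apply]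
    rw [mFourier_apply_add, smul_smul, mul_left_comm, this, mul_one]
  simp only [mFourierCoeff, integrand]
  rw [integral_smul]
  congr 1
  exact integral_add_right_eq_self (μ := Measure.pi fun _ => AddCircle.haarAddCircle)
    (fun x => mFourier (-n) x • Φ x) a

theorem norm_mFourierCoeff_le {K : ℝ} (hK : ∀ x, ‖Φ x‖ ≤ K) (n : ι → ℤ) :
    ‖mFourierCoeff Φ n‖ ≤ K := by
  simpa [mFourierCoeff] using! norm_integral_le_of_norm_le_const
    (μ := Measure.pi fun _ : ι => AddCircle.haarAddCircle (T := 1))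
    (f := fun x => mFourier (-n) x • Φ x) (C := K)
    (.of_forall fun x => by simpa [norm_smul, norm_mFourier_apply] using hK x)

theorem SmoothOnTorus.exists_norm_le (hΦ : SmoothOnTorus Φ) : ∃ K, ∀ x, ‖Φ x‖ ≤ K := by
  simpa using isCompact_univ.exists_bound_of_continuousOn hΦ.continuous.continuousOn

theorem SmoothOnTorus.hasDerivAt_mFourierCoeff_translate (hΦ : SmoothOnTorus Φ) (v : ι → ℝ)
    (n : ι → ℤ) :
    HasDerivAt (fun t : ℝ => mFourierCoeff (fun x => Φ (x + toTorus (t • v))) n)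
      (mFourierCoeff (torusLineDeriv v Φ) n) 0 := by
  obtain ⟨K, hK⟩ := (hΦ.torusLineDeriv v).exists_norm_le
  have integrable {Ψ : UnitAddTorus ι → E} (hΨ : Continuous Ψ) (y : UnitAddTorus ι) :
      Integrable (fun x => mFourier (-n) x • Ψ (x + y))
        (Measure.pi fun _ => AddCircle.haarAddCircle) :=
    Continuous.integrable_of_hasCompactSupport (by fun_prop) (.of_compactSpace _)
  have hasDerivAt_integral := (hasDerivAt_integral_of_dominated_loc_of_deriv_le
    (μ := Measure.pi fun _ : ι => AddCircle.haarAddCircle (T := 1))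
    (F := fun (t : ℝ) x => mFourier (-n) x • Φ (x + toTorus (t • v)))
    (F' := fun (t : ℝ) x => mFourier (-n) x • torusLineDeriv v Φ (x + toTorus (t • v)))
    (bound := fun _ => K) (x₀ := (0 : ℝ)) Filter.univ_mem
    (.of_forall fun t => (integrable hΦ.continuous _).aestronglyMeasurable)
    (integrable hΦ.continuous _)
    (integrable (hΦ.torusLineDeriv v).continuous _).aestronglyMeasurable
    (.of_forall fun x t _ => by simpa [norm_smul, norm_mFourier_apply] using hK _)
    (integrable_const K)
    (.of_forall fun x t _ => (hΦ.hasDerivAt_line v x t).const_smul _)).2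
  simpa [mFourierCoeff] using! hasDerivAt_integral

/- Instead of integrating by parts, differentiate the coefficient of the translates of `Φ`: it is an
integral depending on `t` and, by invariance of Haar measure, an exponential in `t`. -/
theorem SmoothOnTorus.mFourierCoeff_torusLineDeriv (hΦ : SmoothOnTorus Φ) (v : ι → ℝ)
    (n : ι → ℤ) : mFourierCoeff (torusLineDeriv v Φ) n =
      (2 * Real.pi * I * intCovector n v) • mFourierCoeff Φ n := by
  have of_translation : HasDerivAt
      (fun t : ℝ => mFourierCoeff (fun x => Φ (x + toTorus (t • v))) n)
      ((2 * Real.pi * I * intCovector n v) • mFourierCoeff Φ n) 0 := by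
    simp only [mFourierCoeff_comp_add_right]
    have mFourier_apply_zero : mFourier n 0 = 1 := by simp [mFourier]
    simpa [mFourier_apply_zero] using
      (hasDerivAt_mFourier_line n v 0 0).smul_const (mFourierCoeff Φ n)
  exact (hΦ.hasDerivAt_mFourierCoeff_translate v n).unique of_translation

theorem SmoothOnTorus.norm_mul_norm_mFourierCoeff_le [DecidableEq ι] (hΦ : SmoothOnTorus Φ)
    (n : ι → ℤ) (i : ι) :
    ‖n i‖ * ‖mFourierCoeff Φ n‖ ≤ ‖mFourierCoeff (torusLineDeriv (Pi.single i 1) Φ) n‖ := by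
  have one_le_two_pi : 1 ≤ 2 * Real.pi := by linarith [Real.pi_gt_three]
  rw [hΦ.mFourierCoeff_torusLineDeriv, intCovector_single, norm_smul, norm_mul, norm_two_pi_I,
    norm_real, Int.norm_eq_abs, Real.norm_eq_abs]
  gcongr
  exact le_mul_of_one_le_left (abs_nonneg _) one_le_two_pi

theorem SmoothOnTorus.rapidlyDecreasing_mFourierCoeff (hΦ : SmoothOnTorus Φ) :
    RapidlyDecreasing (mFourierCoeff Φ) := by
  classical
  intro N
  induction N generalizing Φ with
  | zero =>
    obtain ⟨K, hK⟩ := hΦ.exists_norm_le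
    exact ⟨K, fun n => by simpa using norm_mFourierCoeff_le hK n⟩
  | succ N ih =>
    let partialDeriv (i : ι) := torusLineDeriv (Pi.single i 1) Φ
    choose K hK using fun i => ih (hΦ.torusLineDeriv (Pi.single i 1))
    refine ⟨∑ i, K i, fun n => ?_⟩
    calc ‖n‖ ^ (N + 1) * ‖mFourierCoeff Φ n‖
        ≤ ‖n‖ ^ N * (∑ i, ‖n i‖) * ‖mFourierCoeff Φ n‖ := by
          rw [pow_succ]
          gcongr
          exact pi_norm_le_sum_norm n
      _ = ∑ i, ‖n‖ ^ N * (‖n i‖ * ‖mFourierCoeff Φ n‖) := by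
          rw [mul_assoc, Finset.sum_mul, Finset.mul_sum]
      _ ≤ ∑ i, ‖n‖ ^ N * ‖mFourierCoeff (partialDeriv i) n‖ := by
          gcongr with i
          exact hΦ.norm_mul_norm_mFourierCoeff_le n i
      _ ≤ ∑ i, K i := Finset.sum_le_sum fun i _ => hK i n

/-- The sum of the Fourier series on the torus with coefficients `c`. -/
noncomputable def fourierSeries (c : (ι → ℤ) → E) (x : UnitAddTorus ι) : E :=
  ∑' n, mFourier n x • c n

theorem SmoothOnTorus.fourierSeries_mFourierCoeff {Φ : UnitAddTorus ι → ℂ} (hΦ : SmoothOnTorus Φ) :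
    fourierSeries (mFourierCoeff Φ) = Φ := by
  ext x
  have hasSum := hasSum_mFourier_series_apply_of_summable (f := ⟨Φ, hΦ.continuous⟩)
    hΦ.rapidlyDecreasing_mFourierCoeff.summable_norm.of_norm x
  exact (tsum_congr fun n => mul_comm _ _).trans hasSum.tsum_eq

namespace RapidlyDecreasing

variable {c : (ι → ℤ) → E}

theorem intCovector_smul (hc : RapidlyDecreasing c) (v : ι → ℝ) :
    RapidlyDecreasing fun n => (2 * Real.pi * I * intCovector n v) • c n := by
  refine hc.of_norm_le_pow_mul (A := 2 * Real.pi * (Fintype.card ι * ‖v‖)) (p := 1) fun n => ?_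
  have : |intCovector n v| ≤ Fintype.card ι * ‖n‖ * ‖v‖ :=
    (intCovector n).le_of_opNorm_le (norm_intCovector_le n) v
  calc ‖(2 * Real.pi * I * intCovector n v) • c n‖
      = 2 * Real.pi * |intCovector n v| * ‖c n‖ := by
        rw [norm_smul, norm_mul, norm_two_pi_I, norm_real, Real.norm_eq_abs]
    _ ≤ 2 * Real.pi * (Fintype.card ι * ‖n‖ * ‖v‖) * ‖c n‖ := by gcongr
    _ = 2 * Real.pi * (Fintype.card ι * ‖v‖) * ‖n‖ ^ 1 * ‖c n‖ := by ring

variable [CompleteSpace E]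

theorem smoothOnTorus_fourierSeries (hc : RapidlyDecreasing c) :
    SmoothOnTorus (fourierSeries c) := by
  simp only [SmoothOnTorus, Function.comp_def, fourierSeries, mFourier_toTorus]
  refine contDiff_tsum (v := fun k n => (2 * Real.pi * Fintype.card ι) ^ k * (‖n‖ ^ k * ‖c n‖))
    (fun n => (contDiff_fourierChar.comp (intCovector n).contDiff).smul_const (c n))
    (fun k _ => (hc.summable_pow_mul_norm k).mul_left _) fun k n x _ => ?_
  calc ‖iteratedFDeriv ℝ k (fun y => (𝐞 (intCovector n y) : ℂ) • c n) x‖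
      ≤ (2 * Real.pi * ‖intCovector n‖) ^ k * ‖c n‖ :=
        norm_iteratedFDeriv_fourierChar_smul_le (intCovector n) (c n) k x
    _ ≤ (2 * Real.pi * (Fintype.card ι * ‖n‖)) ^ k * ‖c n‖ := by
        gcongr
        exact norm_intCovector_le n
    _ = (2 * Real.pi * Fintype.card ι) ^ k * (‖n‖ ^ k * ‖c n‖) := by ring

theorem hasDerivAt_fourierSeries_line (hc : RapidlyDecreasing c) (v : ι → ℝ)
    (x : UnitAddTorus ι) :
    HasDerivAt (fun t : ℝ => fourierSeries c (x + toTorus (t • v)))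
      (fourierSeries (fun n => (2 * Real.pi * I * intCovector n v) • c n) x) 0 := by
  have norm_mode (n : ι → ℤ) (y : UnitAddTorus ι) (e : E) : ‖mFourier n y • e‖ = ‖e‖ := by
    rw [norm_smul, norm_mFourier_apply, one_mul]
  have hasDerivAt_mode (n : ι → ℤ) (t : ℝ) :
      HasDerivAt (fun t : ℝ => mFourier n (x + toTorus (t • v)) • c n)
        (mFourier n (x + toTorus (t • v)) • (2 * Real.pi * I * intCovector n v) • c n) t := by
    rw [smul_smul, mul_comm (mFourier n _)]
    exact (hasDerivAt_mFourier_line n v x t).smul_const (c n)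
  have summable_modes : Summable fun n => mFourier n (x + toTorus ((0 : ℝ) • v)) • c n :=
    .of_norm (by simpa only [norm_mode] using hc.summable_norm)
  simpa [fourierSeries] using hasDerivAt_tsum (hc.intCovector_smul v).summable_norm
    hasDerivAt_mode (fun n _ => (norm_mode n _ _).le) summable_modes 0

end RapidlyDecreasing

/-! ### Small divisors -/

/-- A Diophantine direction: the small divisors `n·v`, `n ≠ 0`, are bounded below by a negative
power of `‖n‖`, the constants being left unspecified. -/
def IsDiophantine (v : ι → ℝ) : Prop :=
  ∃ (A : ℝ) (p : ℕ), ∀ n : ι → ℤ, n ≠ 0 → 1 ≤ A * ‖n‖ ^ p * |intCovector n v|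

theorem IsDiophantine.const_smul {v : ι → ℝ} (hv : IsDiophantine v) {r : ℝ} (hr : r ≠ 0) :
    IsDiophantine (r • v) := by
  obtain ⟨A, p, hA⟩ := hv
  refine ⟨A * |r|⁻¹, p, fun n hn => (hA n hn).trans_eq ?_⟩
  rw [map_smul, smul_eq_mul, abs_mul]
  have : |r| ≠ 0 := abs_ne_zero.2 hr
  field_simp

theorem isDiophantine_of_rpow_le {v : ι → ℝ} {C s : ℝ} (hC : 0 < C)
    (hv : ∀ n : ι → ℤ, n ≠ 0 → C * (∑ i, |(n i : ℝ)|) ^ (-s) ≤ |intCovector n v|) :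
    IsDiophantine v := by
  refine ⟨C⁻¹ * Fintype.card ι ^ ⌈s⌉₊, ⌈s⌉₊, fun n hn => ?_⟩
  set σ := ∑ i, |(n i : ℝ)|
  have one_le : 1 ≤ σ := by
    obtain ⟨i, hi⟩ := Function.ne_iff.1 hn
    calc (1 : ℝ) ≤ |(n i : ℝ)| := mod_cast Int.one_le_abs hi
      _ ≤ σ := Finset.single_le_sum (f := fun i => |(n i : ℝ)|) (fun _ _ => abs_nonneg _)
        (Finset.mem_univ i)
  have rpow_le : σ ^ s ≤ (Fintype.card ι * ‖n‖) ^ ⌈s⌉₊ := by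
    calc σ ^ s ≤ σ ^ (⌈s⌉₊ : ℝ) := Real.rpow_le_rpow_of_exponent_le one_le (Nat.le_ceil s)
      _ = σ ^ ⌈s⌉₊ := Real.rpow_natCast _ _
      _ ≤ (Fintype.card ι * ‖n‖) ^ ⌈s⌉₊ := by
          gcongr
          exact sum_abs_int_le n
  calc 1 = C⁻¹ * σ ^ s * (C * σ ^ (-s)) := by
        rw [Real.rpow_neg (by positivity)]
        field_simp
    _ ≤ C⁻¹ * (Fintype.card ι * ‖n‖) ^ ⌈s⌉₊ * |intCovector n v| := by
        gcongr
        exact hv n hn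
    _ = C⁻¹ * Fintype.card ι ^ ⌈s⌉₊ * ‖n‖ ^ ⌈s⌉₊ * |intCovector n v| := by ring

theorem IsDiophantine.intCovector_ne_zero {v : ι → ℝ} (hv : IsDiophantine v) {n : ι → ℤ}
    (hn : n ≠ 0) : intCovector n v ≠ 0 := by
  obtain ⟨A, p, hA⟩ := hv
  intro h
  simpa [h, zero_lt_one.not_ge] using hA n hn

theorem IsDiophantine.rapidlyDecreasing_div {v : ι → ℝ} (hv : IsDiophantine v)
    {c : (ι → ℤ) → ℂ} (hc : RapidlyDecreasing c) (hc₀ : c 0 = 0) :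
    RapidlyDecreasing fun n => c n / (2 * Real.pi * I * intCovector n v) := by
  have abs_intCovector_pos {n : ι → ℤ} (hn : n ≠ 0) : 0 < |intCovector n v| :=
    abs_pos.2 (hv.intCovector_ne_zero hn)
  obtain ⟨A, p, hA⟩ := hv
  refine hc.of_norm_le_pow_mul (A := (2 * Real.pi)⁻¹ * A) (p := p) fun n => ?_
  rcases eq_or_ne n 0 with rfl | hn
  · simp [hc₀]
  have := abs_intCovector_pos hn
  rw [norm_div, norm_mul, norm_two_pi_I, norm_real, Real.norm_eq_abs, div_le_iff₀ (by positivity)]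
  calc ‖c n‖ ≤ A * ‖n‖ ^ p * |intCovector n v| * ‖c n‖ :=
        le_mul_of_one_le_left (norm_nonneg _) (hA n hn)
    _ = (2 * Real.pi)⁻¹ * A * ‖n‖ ^ p * ‖c n‖ * (2 * Real.pi * |intCovector n v|) := by
        field_simp

theorem IsDiophantine.exists_smoothOnTorus_hasDerivAt_line {v : ι → ℝ} (hv : IsDiophantine v)
    {Φ : UnitAddTorus ι → ℂ} (hΦ : SmoothOnTorus Φ) (hmean : mFourierCoeff Φ 0 = 0) :
    ∃ Γ : UnitAddTorus ι → ℂ, SmoothOnTorus Γ ∧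
      ∀ x, HasDerivAt (fun t : ℝ => Γ (x + toTorus (t • v))) (Φ x) 0 := by
  let d (n : ι → ℤ) : ℂ := mFourierCoeff Φ n / (2 * Real.pi * I * intCovector n v)
  have hd : RapidlyDecreasing d := hv.rapidlyDecreasing_div hΦ.rapidlyDecreasing_mFourierCoeff hmean
  have smul_d (n : ι → ℤ) : (2 * Real.pi * I * intCovector n v) • d n = mFourierCoeff Φ n := by
    rcases eq_or_ne n 0 with rfl | hn
    · simp [d, hmean]
    · have := hv.intCovector_ne_zero hn
      exact mul_div_cancel₀ _ (mul_ne_zero two_pi_I_ne_zero (ofReal_ne_zero.2 this))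
  refine ⟨fourierSeries d, hd.smoothOnTorus_fourierSeries, fun x => ?_⟩
  simpa only [smul_d, hΦ.fourierSeries_mFourierCoeff] using hd.hasDerivAt_fourierSeries_line v x

/-! ### Functions of period `2π` -/

theorem TorusPeriodic.exists_comp_toTorus {L : ℕ} {f : (Fin L → ℝ) → ℂ}
    (hper : TorusPeriodic L f) :
    ∃ Φ : UnitAddTorus (Fin L) → ℂ, ∀ x, Φ (toTorus x) = f ((2 * Real.pi) • x) := by
  have factors : Function.FactorsThrough (fun x => f ((2 * Real.pi) • x)) toTorus := by
    intro x y hxy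
    obtain ⟨m, rfl⟩ := toTorus_eq_iff.1 hxy
    change f _ = f _
    rw [smul_add]
    exact hper _ m
  exact ⟨_, factors.extend_apply 0⟩

theorem torusPeriodic_comp_toTorus {L : ℕ} (Γ : UnitAddTorus (Fin L) → ℂ) :
    TorusPeriodic L fun θ => Γ (toTorus ((2 * Real.pi)⁻¹ • θ)) := by
  intro θ m
  refine congrArg Γ (toTorus_eq_iff.2 ⟨m, ?_⟩)
  ext l
  simp only [Pi.smul_apply, Pi.add_apply, smul_eq_mul]
  field_simp

theorem mFourierCoeff_eq_setIntegral_Icc (Φ : UnitAddTorus ι → E) (n : ι → ℤ) :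
    mFourierCoeff Φ n = ∫ x in Set.univ.pi fun _ => Set.Icc (0 : ℝ) 1,
      (𝐞 (-intCovector n x) : ℂ) • Φ (toTorus x) := by
  have half_open_box : {x : ι → ℝ | ∀ i, x i ∈ Set.Ioc ((0 : ι → ℝ) i) ((0 : ι → ℝ) i + 1)} =
      Set.univ.pi fun _ => Set.Ioc 0 1 := by ext x; simp
  have intCovector_neg (x : ι → ℝ) : intCovector (-n) x = -intCovector n x := by
    simp [intCovector_apply]
  rw [mFourierCoeff_eq_integral _ _ 0, half_open_box, volume_pi,
    setIntegral_congr_set Measure.univ_pi_Ioc_ae_eq_Icc, Set.pi_univ_Icc]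
  simp only [← intCovector_neg, ← mFourier_toTorus]
  rfl

open scoped Pointwise in
theorem torusFourierCoef_eq_mFourierCoeff {L : ℕ} {f : (Fin L → ℝ) → ℂ}
    {Φ : UnitAddTorus (Fin L) → ℂ} (hΦ : ∀ x, Φ (toTorus x) = f ((2 * Real.pi) • x))
    (j : Fin L → ℤ) : torusFourierCoef L f j = mFourierCoeff Φ j := by
  have scaled_box : (2 * Real.pi) • (Set.univ.pi fun _ : Fin L => Set.Icc (0 : ℝ) 1) =
      Set.univ.pi fun _ => Set.Icc 0 (2 * Real.pi) := by
    simp only [smul_univ_pi, Pi.smul_def, LinearOrderedField.smul_Icc Real.two_pi_pos, mul_zero,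
      mul_one]
  have character (x : Fin L → ℝ) :
      Complex.exp (-I * ∑ l, (j l : ℂ) * (((2 * Real.pi) • x) l : ℂ)) =
        𝐞 (-intCovector j x) := by
    rw [Real.fourierChar_apply, intCovector_apply]
    congr 1
    push_cast [Pi.smul_apply, smul_eq_mul]
    simp only [mul_left_comm _ (2 * Real.pi : ℂ), ← Finset.mul_sum]
    ring
  have change_of_variables := Measure.setIntegral_comp_smul_of_pos volume
    (fun θ => Complex.exp (-I * ∑ l, (j l : ℂ) * (θ l : ℂ)) * f θ)
    (Set.univ.pi fun _ : Fin L => Set.Icc (0 : ℝ) 1) Real.two_pi_pos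
  simp only [character, ← hΦ] at change_of_variables
  rw [scaled_box, Module.finrank_fin_fun, real_smul, ofReal_inv] at change_of_variables
  rw [mFourierCoeff_eq_setIntegral_Icc, torusFourierCoef]
  exact change_of_variables.symm

theorem smooth_cohomological_equation_flow_general
    (L : ℕ) (α : Fin L → ℝ) (C s : ℝ) (hC : 0 < C)
    (hdio : ∀ j : Fin L → ℤ, j ≠ 0 →
      |∑ l, (j l : ℝ) * α l| ≥ C * ((∑ l, (j l).natAbs : ℝ)) ^ (-s))
    (f : (Fin L → ℝ) → ℂ) (hf : ContDiff ℝ (⊤ : ℕ∞) f) (hper : TorusPeriodic L f)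
    (hmean : torusFourierCoef L f 0 = 0) :
    ∃ g : (Fin L → ℝ) → ℂ, ContDiff ℝ (⊤ : ℕ∞) g ∧ TorusPeriodic L g ∧
      ∀ θ : Fin L → ℝ, HasDerivAt (fun t : ℝ => g (θ + t • α)) (f θ) 0 := by
  have diophantine : IsDiophantine α := isDiophantine_of_rpow_le hC fun j hj => by
    simpa only [intCovector_apply, Nat.cast_natAbs, Int.cast_abs] using hdio j hj
  obtain ⟨Φ, hΦf⟩ := hper.exists_comp_toTorus
  have hΦ : SmoothOnTorus Φ := by
    simpa only [SmoothOnTorus, Function.comp_def, hΦf] using hf.comp (contDiff_const_smul _)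
  obtain ⟨Γ, hΓ, hasDerivAt_Γ⟩ :=
    (diophantine.const_smul (inv_ne_zero Real.two_pi_pos.ne')).exists_smoothOnTorus_hasDerivAt_line
      hΦ (torusFourierCoef_eq_mFourierCoeff hΦf 0 ▸ hmean)
  let g (θ : Fin L → ℝ) : ℂ := Γ (toTorus ((2 * Real.pi)⁻¹ • θ))
  have contDiff_g : ContDiff ℝ ∞ g :=
    ContDiff.comp (g := Γ ∘ toTorus) hΓ (contDiff_const_smul _)
  refine ⟨g, contDiff_g, torusPeriodic_comp_toTorus Γ, fun θ => ?_⟩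
  have hasDerivAt_g := hasDerivAt_Γ (toTorus ((2 * Real.pi)⁻¹ • θ))
  rw [hΦf, smul_inv_smul₀ Real.two_pi_pos.ne'] at hasDerivAt_g
  simpa only [g, smul_add, map_add, smul_comm _ (2 * Real.pi)⁻¹] using hasDerivAt_g

end Development

/-- If `α` satisfies the Diophantine condition
`|j·α| ≥ C‖j‖^{−s}` for all nonzero `j ∈ ℤ^L` and `f` is smooth on the torus
with zero mean, then there is a smooth torus function `g` whose directional
derivative along `α` equals `f`. -/
theorem smooth_cohomological_equation_flow
    (L : ℕ) (α : Fin L → ℝ) (C s : ℝ) (hC : 0 < C) (hs : 1 < s)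
    (hdio : ∀ j : Fin L → ℤ, j ≠ 0 →
      |∑ l, (j l : ℝ) * α l| ≥ C * ((∑ l, (j l).natAbs : ℝ)) ^ (-s))
    (f : (Fin L → ℝ) → ℂ) (hf : ContDiff ℝ (⊤ : ℕ∞) f) (hper : TorusPeriodic L f)
    (hmean : torusFourierCoef L f 0 = 0) :
    ∃ g : (Fin L → ℝ) → ℂ, ContDiff ℝ (⊤ : ℕ∞) g ∧ TorusPeriodic L g ∧
      ∀ θ : Fin L → ℝ, deriv (fun t : ℝ => g (θ + t • α)) 0 = f θ := by
  obtain ⟨g, hg, hgper, hasDerivAt_g⟩ :=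
    smooth_cohomological_equation_flow_general L α C s hC hdio f hf hper hmean
  exact ⟨g, hg, hgper, fun θ => (hasDerivAt_g θ).deriv⟩
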